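/- arXiv:2602.05333 — 3 statements merged into one kernel-verified Lean document; each statement's English description precedes it below -/
import Mathlib

section
/- In the finite pool-based AL model with self-referential tilted information j̃, for every w ∈ 𝒲 with P_W(w) > 0, the conditional variance of j̃(w,U,H) given W = w decomposes as Var( j̃(w,U,H) | W=w ) = V_U^ι(w) + V_S^ι(w) + V_A^ι(w) + λ²·( V_U^𝖽(w) + V_S^𝖽(w) + V_A^𝖽(w) ) + 2λ·C(w), where, with all expectations, variances and covariances taken under the conditional law of (U,T,H) given W = w (namely P_{U|W}(u|w)·P_{T|U}(t|u)·P_{H|T}(h|t)): V_U^ι(w) is the variance over U of the conditional expectation E[ι(U;H) | U]; V_S^ι(w) is the expectation over U of the variance over T (given U) of the conditional expectation E[ι(U;H) | U,T]; V_A^ι(w) is the expectation over (U,T) of the variance over H (given T) of ι(U;H); V_U^𝖽(w), V_S^𝖽(w), V_A^𝖽(w) are the analogous three quantities with ι(U;H) replaced by 𝖽(w,H); and C(w) := Cov( ι(U;H), 𝖽(w,H) ). Consequently V_in := Σ_w P_W(w)·Var( j̃(w,U,H) | W=w ) equals the P_W-expectation of the above sum of seven terms. -/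
open scoped BigOperators

/-- Information density `ι(u;h) = log ( P_{UH}(u,h) / (P_U(u)·P_H(h)) )` of the joint law
of `(U,H)` in the finite pool-based AL model with joint law
`P(w,u,t,h) = PW w * PU w u * PT u t * PH t h`. -/
noncomputable def iotaUH {𝒲 𝒰 𝒯 ℋ : Type*} [Fintype 𝒲] [Fintype 𝒰] [Fintype 𝒯] [Fintype ℋ]
    (PW : 𝒲 → ℝ) (PU : 𝒲 → 𝒰 → ℝ) (PT : 𝒰 → 𝒯 → ℝ) (PH : 𝒯 → ℋ → ℝ)
    (u : 𝒰) (h : ℋ) : ℝ :=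
  Real.log ((∑ w, ∑ t, PW w * PU w u * PT u t * PH t h) /
    ((∑ w, ∑ t, ∑ h', PW w * PU w u * PT u t * PH t h') *
      (∑ w, ∑ u', ∑ t, PW w * PU w u' * PT u' t * PH t h)))

/-- Expectation of `f(U,T,H)` under the conditional law of `(U,T,H)` given `W = w`,
namely `PU w u * PT u t * PH t h`. -/
noncomputable def condExpW {𝒲 𝒰 𝒯 ℋ : Type*} [Fintype 𝒰] [Fintype 𝒯] [Fintype ℋ]
    (PU : 𝒲 → 𝒰 → ℝ) (PT : 𝒰 → 𝒯 → ℝ) (PH : 𝒯 → ℋ → ℝ)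
    (f : 𝒰 → 𝒯 → ℋ → ℝ) (w : 𝒲) : ℝ :=
  ∑ u, ∑ t, ∑ h, PU w u * PT u t * PH t h * f u t h

/-- Variance of `f(U,T,H)` under the conditional law of `(U,T,H)` given `W = w`. -/
noncomputable def condVarW {𝒲 𝒰 𝒯 ℋ : Type*} [Fintype 𝒰] [Fintype 𝒯] [Fintype ℋ]
    (PU : 𝒲 → 𝒰 → ℝ) (PT : 𝒰 → 𝒯 → ℝ) (PH : 𝒯 → ℋ → ℝ)
    (f : 𝒰 → 𝒯 → ℋ → ℝ) (w : 𝒲) : ℝ :=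
  condExpW PU PT PH (fun u t h => (f u t h - condExpW PU PT PH f w) ^ 2) w

/-- Bias–variance identity for a finitely supported law of total mass one. -/
lemma sum_mul_sub_sq_eq {α : Type*} [Fintype α] (p f : α → ℝ) (hp : ∑ a, p a = 1) (c : ℝ) :
    ∑ a, p a * (f a - c) ^ 2
      = ∑ a, p a * (f a - ∑ b, p b * f b) ^ 2 + (∑ b, p b * f b - c) ^ 2 := by
  have expand (e : ℝ) : ∑ a, p a * (f a - e) ^ 2
      = ∑ a, p a * f a ^ 2 - 2 * e * ∑ a, p a * f a + e ^ 2 := by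
    calc ∑ a, p a * (f a - e) ^ 2
        = ∑ a, (p a * f a ^ 2 - 2 * e * (p a * f a) + e ^ 2 * p a) :=
          Finset.sum_congr rfl fun a _ => by ring
      _ = _ := by
          rw [Finset.sum_add_distrib, Finset.sum_sub_distrib, ← Finset.mul_sum,
            ← Finset.mul_sum, hp, mul_one]
  rw [expand, expand]
  ring

section CondExpW

variable {𝒲 𝒰 𝒯 ℋ : Type*} [Fintype 𝒰] [Fintype 𝒯] [Fintype ℋ]
  (PU : 𝒲 → 𝒰 → ℝ) (PT : 𝒰 → 𝒯 → ℝ) (PH : 𝒯 → ℋ → ℝ)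

lemma condExpW_add (f g : 𝒰 → 𝒯 → ℋ → ℝ) (w : 𝒲) :
    condExpW PU PT PH (fun u t h => f u t h + g u t h) w
      = condExpW PU PT PH f w + condExpW PU PT PH g w := by
  simp only [condExpW, mul_add, Finset.sum_add_distrib]

lemma condExpW_const_mul (c : ℝ) (f : 𝒰 → 𝒯 → ℋ → ℝ) (w : 𝒲) :
    condExpW PU PT PH (fun u t h => c * f u t h) w = c * condExpW PU PT PH f w := by
  simp only [condExpW, mul_left_comm _ c, ← Finset.mul_sum]

/-- Tower property: the expectation as an iterated one. -/
lemma condExpW_eq_iterated (f : 𝒰 → 𝒯 → ℋ → ℝ) (w : 𝒲) :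
    condExpW PU PT PH f w = ∑ u, PU w u * ∑ t, PT u t * ∑ h, PH t h * f u t h := by
  simp only [condExpW, Finset.mul_sum, mul_assoc]

lemma condExpW_const (hPU1 : ∀ w, ∑ u, PU w u = 1) (hPT1 : ∀ u, ∑ t, PT u t = 1)
    (hPH1 : ∀ t, ∑ h, PH t h = 1) (c : ℝ) (w : 𝒲) :
    condExpW PU PT PH (fun _ _ _ => c) w = c := by
  simp only [condExpW_eq_iterated, ← Finset.sum_mul, hPU1, hPT1, hPH1, one_mul]

/-- Law of total variance along the chain `U → T → H`. -/
lemma condVarW_eq_add (hPT1 : ∀ u, ∑ t, PT u t = 1)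
    (hPH1 : ∀ t, ∑ h, PH t h = 1) (f : 𝒰 → 𝒯 → ℋ → ℝ) (w : 𝒲) :
    condVarW PU PT PH f w
      = ∑ u, PU w u * (∑ t, ∑ h, PT u t * PH t h * f u t h
            - ∑ u', PU w u' * ∑ t, ∑ h, PT u' t * PH t h * f u' t h) ^ 2
        + ∑ u, PU w u * ∑ t, PT u t *
            (∑ h, PH t h * f u t h - ∑ t', PT u t' * ∑ h, PH t' h * f u t' h) ^ 2
        + ∑ u, PU w u * ∑ t, PT u t * ∑ h, PH t h * (f u t h - ∑ h', PH t h' * f u t h') ^ 2 := by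
  have iter (u : 𝒰) : ∑ t, ∑ h, PT u t * PH t h * f u t h
      = ∑ t, PT u t * ∑ h, PH t h * f u t h := by
    simp only [Finset.mul_sum, mul_assoc]
  simp only [iter]
  rw [condVarW, condExpW_eq_iterated, condExpW_eq_iterated]
  set m := ∑ u, PU w u * ∑ t, PT u t * ∑ h, PH t h * f u t h
  have overH (u : 𝒰) (t : 𝒯) := sum_mul_sub_sq_eq (PH t) (f u t) (hPH1 t) m
  have overT (u : 𝒰) :=
    sum_mul_sub_sq_eq (PT u) (fun t => ∑ h, PH t h * f u t h) (hPT1 u) m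
  simp only [overH, mul_add, Finset.sum_add_distrib, overT]
  ring

/-- Variance of an affine combination in terms of variances and the covariance. -/
lemma condVarW_add_const_mul_sub (hPU1 : ∀ w, ∑ u, PU w u = 1) (hPT1 : ∀ u, ∑ t, PT u t = 1)
    (hPH1 : ∀ t, ∑ h, PH t h = 1) (f g : 𝒰 → 𝒯 → ℋ → ℝ) (c d : ℝ) (w : 𝒲) :
    condVarW PU PT PH (fun u t h => f u t h + c * (g u t h - d)) w
      = condVarW PU PT PH f w + c ^ 2 * condVarW PU PT PH g w
        + 2 * c * condExpW PU PT PH (fun u t h =>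
            (f u t h - condExpW PU PT PH f w) * (g u t h - condExpW PU PT PH g w)) w := by
  have mean : condExpW PU PT PH (fun u t h => f u t h + c * (g u t h - d)) w
      = condExpW PU PT PH f w + c * (condExpW PU PT PH g w - d) := by
    simp only [sub_eq_add_neg, condExpW_add, condExpW_const_mul,
      condExpW_const PU PT PH hPU1 hPT1 hPH1]
  simp only [condVarW, mean]
  rw [← condExpW_const_mul, ← condExpW_const_mul, ← condExpW_add, ← condExpW_add]
  congr 1
  funext u t h
  ring

end CondExpW

/-- **Seven-term decomposition of the conditional variance `V_in(w)`**
(the decomposition of `V_in` in Section 4.2 of the paper).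

In the finite pool-based AL model with joint law
`P(w,u,t,h) = PW w * PU w u * PT u t * PH t h` and self-referential tilted information
`j̃(w,u,h) = ι(u;h) + lam * (dst w h − d)`, for every `w` with `PW w > 0` the
conditional variance of `j̃(w,U,H)` given `W = w` decomposes as
`V_U^ι + V_S^ι + V_A^ι + lam²·(V_U^𝖽 + V_S^𝖽 + V_A^𝖽) + 2·lam·C`, and consequently
`V_in = ∑ w, PW w · Var(j̃(w,U,H) | W = w)` equals the `PW`-expectation of this sum. -/
theorem V_in_decomposition
    {𝒲 𝒰 𝒯 ℋ : Type*} [Fintype 𝒲] [Nonempty 𝒲] [Fintype 𝒰] [Nonempty 𝒰]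
    [Fintype 𝒯] [Nonempty 𝒯] [Fintype ℋ] [Nonempty ℋ]
    (PW : 𝒲 → ℝ) (hPW0 : ∀ w, 0 ≤ PW w) (hPW1 : ∑ w, PW w = 1)
    (PU : 𝒲 → 𝒰 → ℝ) (hPU0 : ∀ w u, 0 ≤ PU w u) (hPU1 : ∀ w, ∑ u, PU w u = 1)
    (PT : 𝒰 → 𝒯 → ℝ) (hPT0 : ∀ u t, 0 ≤ PT u t) (hPT1 : ∀ u, ∑ t, PT u t = 1)
    (PH : 𝒯 → ℋ → ℝ) (hPH0 : ∀ t h, 0 ≤ PH t h) (hPH1 : ∀ t, ∑ h, PH t h = 1)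
    (dst : 𝒲 → ℋ → ℝ) (hdst : ∀ w h, 0 ≤ dst w h) (d : ℝ) (hd : 0 ≤ d)
    (lam : ℝ) (hlam : 0 < lam) :
    let ι : 𝒰 → ℋ → ℝ := iotaUH PW PU PT PH
    let jT : 𝒲 → 𝒰 → ℋ → ℝ := fun w u h => ι u h + lam * (dst w h - d)
    -- conditional expectation of ι(U;H) given U = u (under the law of (T,H) given U)
    let EiU : 𝒰 → ℝ := fun u => ∑ t, ∑ h, PT u t * PH t h * ι u h
    -- conditional expectation of ι(U;H) given U = u, T = t
    let EiUT : 𝒰 → 𝒯 → ℝ := fun u t => ∑ h, PH t h * ι u h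
    -- variance over U of E[ι(U;H) | U]
    let VUι : 𝒲 → ℝ := fun w =>
      ∑ u, PU w u * (EiU u - ∑ u', PU w u' * EiU u') ^ 2
    -- E over U of the variance over T of E[ι(U;H) | U, T]
    let VSι : 𝒲 → ℝ := fun w =>
      ∑ u, PU w u * ∑ t, PT u t * (EiUT u t - ∑ t', PT u t' * EiUT u t') ^ 2
    -- E over (U,T) of the variance over H of ι(U;H)
    let VAι : 𝒲 → ℝ := fun w =>
      ∑ u, PU w u * ∑ t, PT u t * ∑ h, PH t h * (ι u h - EiUT u t) ^ 2
    -- analogous quantities with ι(U;H) replaced by 𝖽(w,H)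
    let EdU : 𝒲 → 𝒰 → ℝ := fun w u => ∑ t, ∑ h, PT u t * PH t h * dst w h
    let EdT : 𝒲 → 𝒯 → ℝ := fun w t => ∑ h, PH t h * dst w h
    let VUd : 𝒲 → ℝ := fun w =>
      ∑ u, PU w u * (EdU w u - ∑ u', PU w u' * EdU w u') ^ 2
    let VSd : 𝒲 → ℝ := fun w =>
      ∑ u, PU w u * ∑ t, PT u t * (EdT w t - ∑ t', PT u t' * EdT w t') ^ 2
    let VAd : 𝒲 → ℝ := fun w =>
      ∑ u, PU w u * ∑ t, PT u t * ∑ h, PH t h * (dst w h - EdT w t) ^ 2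
    -- conditional covariance of ι(U;H) and 𝖽(w,H) given W = w
    let C : 𝒲 → ℝ := fun w =>
      condExpW PU PT PH (fun u _ h =>
        (ι u h - condExpW PU PT PH (fun u' _ h' => ι u' h') w) *
        (dst w h - condExpW PU PT PH (fun _ _ h' => dst w h') w)) w
    (∀ w, 0 < PW w →
      condVarW PU PT PH (fun u _ h => jT w u h) w
        = VUι w + VSι w + VAι w + lam ^ 2 * (VUd w + VSd w + VAd w) + 2 * lam * C w)
    ∧ (∑ w, PW w * condVarW PU PT PH (fun u _ h => jT w u h) w)
        = ∑ w, PW w *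
            (VUι w + VSι w + VAι w + lam ^ 2 * (VUd w + VSd w + VAd w) + 2 * lam * C w) := by
  intro ι jT EiU EiUT VUι VSι VAι EdU EdT VUd VSd VAd C
  have decomposition (w : 𝒲) : condVarW PU PT PH (fun u _ h => jT w u h) w
      = VUι w + VSι w + VAι w + lam ^ 2 * (VUd w + VSd w + VAd w) + 2 * lam * C w := by
    rw [condVarW_add_const_mul_sub PU PT PH hPU1 hPT1 hPH1 (fun u _ h => ι u h)
        (fun _ _ h => dst w h) lam d w,
      condVarW_eq_add PU PT PH hPT1 hPH1, condVarW_eq_add PU PT PH hPT1 hPH1]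
  exact ⟨fun w _ => decomposition w,
    Finset.sum_congr rfl fun w _ => congrArg (PW w * ·) (decomposition w)⟩
end

section
/- Let 𝒵 be a measurable space, μ a probability measure on 𝒵, n a positive integer, and Z = (Z_1,…,Z_n) an i.i.d. sample from μ. Let g : 𝒵ⁿ → ℝ be bounded measurable, and suppose there exist β ≥ 0 and a bounded measurable function g₀ : 𝒵^{n−1} → ℝ such that for every i ∈ {1,…,n} and every z ∈ 𝒵ⁿ, |g(z) − g₀(z^{∖i})| ≤ β, where z^{∖i} denotes z with its i-th coordinate removed (removal form of uniform stability). Then Var( g(Z) ) ≤ 2·n·β². -/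
open MeasureTheory ProbabilityTheory

/-- Popoviciu's inequality in terms of the oscillation of a bounded function. -/
lemma variance_le_sq_of_oscillation_le {Ω : Type*} [MeasurableSpace Ω] (μ : Measure Ω)
    [IsProbabilityMeasure μ] {f : Ω → ℝ} (hf : Measurable f) {C : ℝ} (hC : ∀ x, |f x| ≤ C)
    {δ : ℝ} (hδ : ∀ x y, |f x - f y| ≤ δ) : variance f μ ≤ (δ / 2) ^ 2 := by
  have hne : Nonempty Ω := nonempty_of_isProbabilityMeasure μ
  have hbdd : BddBelow (Set.range f) := ⟨-C, by rintro _ ⟨x, rfl⟩; exact (abs_le.1 (hC x)).1⟩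
  have hmem : ∀ x, f x ∈ Set.Icc (⨅ y, f y) ((⨅ y, f y) + δ) := by
    refine fun x => ⟨ciInf_le hbdd x, ?_⟩
    have : f x - δ ≤ ⨅ y, f y := le_ciInf fun y => by linarith [(abs_le.1 (hδ x y)).2]
    linarith
  simpa using variance_le_sq_of_bounded (ae_of_all μ hmem) hf.aemeasurable

/-- A bounded measurable function on a product has variance at most the variance of its partial
mean plus a uniform bound on its conditional variances. -/
lemma variance_prod_le {α γ : Type*} [MeasurableSpace α] [MeasurableSpace γ]
    (μ : Measure α) (ν : Measure γ) [IsProbabilityMeasure μ] [IsProbabilityMeasure ν]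
    {F : α × γ → ℝ} (hF : Measurable F) {C : ℝ} (hC : ∀ p, |F p| ≤ C)
    {c : ℝ} (hc : ∀ y, variance (fun x => F (x, y)) μ ≤ c) :
    variance F (μ.prod ν) ≤ c + variance (fun y => ∫ x, F (x, y) ∂μ) ν := by
  have hmean : Measurable fun y => ∫ x, F (x, y) ∂μ :=
    hF.stronglyMeasurable.integral_prod_left'.measurable
  have hmeanC : ∀ y, ‖∫ x, F (x, y) ∂μ‖ ≤ C := fun y => by
    simpa using norm_integral_le_of_norm_le_const (μ := μ) (f := fun x => F (x, y))
      (ae_of_all _ fun x => hC (x, y))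
  have hF2 : MemLp F 2 (μ.prod ν) := .of_bound hF.aestronglyMeasurable C (ae_of_all _ hC)
  have hmean2 : MemLp (fun y => ∫ x, F (x, y) ∂μ) 2 ν :=
    .of_bound hmean.aestronglyMeasurable C (ae_of_all _ hmeanC)
  have hsection : ∀ y, ∫ x, F (x, y) ^ 2 ∂μ ≤ c + (∫ x, F (x, y) ∂μ) ^ 2 := fun y => by
    have hy : MemLp (fun x => F (x, y)) 2 μ :=
      .of_bound (hF.comp measurable_prodMk_right).aestronglyMeasurable C
        (ae_of_all _ fun x => hC (x, y))
    have h := hc y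
    rw [variance_eq_sub hy] at h
    simp only [Pi.pow_apply] at h
    linarith
  rw [variance_eq_sub hF2, variance_eq_sub hmean2]
  simp only [Pi.pow_apply]
  rw [integral_prod_symm _ hF2.integrable_sq, integral_prod_symm _ (hF2.integrable one_le_two)]
  have h := integral_mono hF2.integrable_sq.integral_prod_right
    ((integrable_const c).add hmean2.integrable_sq) hsection
  simp only [Pi.add_apply] at h
  rw [integral_add (integrable_const c) hmean2.integrable_sq] at h
  simp only [integral_const, probReal_univ, one_smul] at h
  linarith

/-- Variance bound for functions of independent variables with bounded differences. -/
lemma variance_pi_le_of_bounded_differences {𝒵 : Type*} [MeasurableSpace 𝒵] (μ : Measure 𝒵)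
    [IsProbabilityMeasure μ] {k : ℕ} {f : (Fin k → 𝒵) → ℝ} (hf : Measurable f)
    {C : ℝ} (hC : ∀ z, |f z| ≤ C) {δ : Fin k → ℝ}
    (hδ : ∀ i z x, |f (Function.update z i x) - f z| ≤ δ i) :
    variance f (Measure.pi fun _ : Fin k => μ) ≤ ∑ i, (δ i / 2) ^ 2 := by
  induction k with
  | zero =>
    refine (variance_le_sq_of_oscillation_le _ hf hC (δ := 0) fun x y => ?_).trans (by simp)
    simp [Subsingleton.elim x y]
  | succ k ih =>
    have hcons : Measurable fun p : 𝒵 × (Fin k → 𝒵) => (Fin.cons p.1 p.2 : Fin (k + 1) → 𝒵) :=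
      measurable_pi_iff.2 (Fin.cases (by simpa using measurable_fst)
        fun j => (measurable_pi_apply j).comp measurable_snd)
    have hF : Measurable fun p : 𝒵 × (Fin k → 𝒵) => f (Fin.cons p.1 p.2) := hf.comp hcons
    have hsection : ∀ z : Fin k → 𝒵, Measurable fun x => f (Fin.cons x z) := fun z =>
      hF.comp measurable_prodMk_right
    have hint : ∀ z : Fin k → 𝒵, Integrable (fun x => f (Fin.cons x z)) μ := fun z =>
      .of_bound (hsection z).aestronglyMeasurable C (ae_of_all _ fun x => hC _)
    have hpi : variance f (Measure.pi fun _ : Fin (k + 1) => μ) =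
        variance (fun p : 𝒵 × (Fin k → 𝒵) => f (Fin.cons p.1 p.2))
          (μ.prod (Measure.pi fun _ => μ)) := by
      rw [← (measurePreserving_piFinSuccAbove (fun _ : Fin (k + 1) => μ) 0).variance_fun_comp
        hF.aemeasurable]
      congr 1
      ext z
      exact congrArg f (Fin.cons_self_tail z).symm
    rw [hpi, Fin.sum_univ_succ]
    refine (variance_prod_le μ _ hF (fun p => hC _) fun z => ?_).trans
      (add_le_add_right (ih ?_ ?_ ?_) _)
    · refine variance_le_sq_of_oscillation_le μ (hsection z) (fun x => hC _) fun x y => ?_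
      simpa using hδ 0 (Fin.cons y z) x
    · exact hF.stronglyMeasurable.integral_prod_left'.measurable
    · intro z
      simpa using norm_integral_le_of_norm_le_const (μ := μ)
        (f := fun x => f (Fin.cons x z)) (ae_of_all _ fun x => hC (Fin.cons x z))
    · intro i z y
      rw [← integral_sub (hint _) (hint _)]
      have h := norm_integral_le_of_norm_le_const (μ := μ)
        (f := fun x => f (Function.update (Fin.cons x z) i.succ y) - f (Fin.cons x z))
        (ae_of_all _ fun x => hδ i.succ (Fin.cons x z) y)
      simpa [← Fin.cons_update] using h

/-- **Variance bound from removal-form uniform stability.**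
Let `Z = (Z_1, …, Z_n)` be an i.i.d. sample from a probability measure `μ` on `𝒵`
(sample size `n = m + 1`, a positive integer), and let `g : 𝒵ⁿ → ℝ` be bounded
measurable.  Suppose there are `β ≥ 0` and a bounded measurable
`g₀ : 𝒵^{n−1} → ℝ` with `|g z − g₀ (z^{∖i})| ≤ β` for every coordinate `i` and
every `z`, where `z^{∖i}` is `z` with its `i`-th coordinate removed.  Then
`Var (g Z) ≤ 2·n·β²`. -/
theorem variance_le_of_removal_stability
    {𝒵 : Type*} [MeasurableSpace 𝒵] (μ : Measure 𝒵) [IsProbabilityMeasure μ]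
    (m : ℕ) (g : (Fin (m + 1) → 𝒵) → ℝ) (hg : Measurable g)
    (C : ℝ) (hgb : ∀ z, |g z| ≤ C)
    (β : ℝ) (hβ : 0 ≤ β)
    (g₀ : (Fin m → 𝒵) → ℝ) (hg₀ : Measurable g₀)
    (C₀ : ℝ) (hg₀b : ∀ z, |g₀ z| ≤ C₀)
    (hstab : ∀ (i : Fin (m + 1)) (z : Fin (m + 1) → 𝒵),
      |g z - g₀ (fun j => z (i.succAbove j))| ≤ β) :
    variance g (Measure.pi fun _ : Fin (m + 1) => μ) ≤ 2 * (m + 1) * β ^ 2 := by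
  have hdiff : ∀ i z x, |g (Function.update z i x) - g z| ≤ 2 * β := fun i z x => by
    have h₁ := abs_le.1 (hstab i z)
    have h₂ := abs_le.1 (hstab i (Function.update z i x))
    simp only [Function.update_of_ne (Fin.succAbove_ne i _)] at h₂
    exact abs_le.2 ⟨by linarith, by linarith⟩
  have h := variance_pi_le_of_bounded_differences μ hg hgb hdiff
  simp only [Finset.sum_const, Finset.card_univ, Fintype.card_fin, nsmul_eq_mul, Nat.cast_add,
    Nat.cast_one, mul_div_cancel_left₀ β two_ne_zero] at h
  have hnonneg : 0 ≤ ((m : ℝ) + 1) * β ^ 2 := by positivity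
  linarith
end

section
/- In the finite pool-based AL model with P_W, the pool-observation kernel P_{U|W}, and the learning kernel P_{H|T} fixed, define for each real d the constrained information function 𝕉(d) := inf { I(U;H) : S a Markov kernel from 𝒰 to 𝒯 such that E[ 𝖽(W,H) ] ≤ d under the joint law induced by P_W, P_{U|W}, S, P_{H|T} }, with 𝕉(d) := +∞ if no such S exists, where I(U;H) is the mutual information between U and H under this induced joint law. Then 𝕉 is non-increasing in d, and 𝕉 is convex on the set of d for which it is finite: for d₁, d₂ with 𝕉(d₁), 𝕉(d₂) < ∞ and θ ∈ [0,1], 𝕉(θ·d₁ + (1−θ)·d₂) ≤ θ·𝕉(d₁) + (1−θ)·𝕉(d₂). -/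
open scoped BigOperators

/-- A Markov kernel from `α` to a finite type `β`: every row is a probability mass
function. -/
def IsKernel {α β : Type*} [Fintype β] (K : α → β → ℝ) : Prop :=
  ∀ a, (∀ b, 0 ≤ K a b) ∧ ∑ b, K a b = 1

/-- Joint probability mass of `(U,H)` in the finite pool-based AL model with
data-selection kernel `S`. -/
noncomputable def pUH {𝒲 𝒰 𝒯 ℋ : Type*} [Fintype 𝒲] [Fintype 𝒯]
    (PW : 𝒲 → ℝ) (PU : 𝒲 → 𝒰 → ℝ) (S : 𝒰 → 𝒯 → ℝ) (PH : 𝒯 → ℋ → ℝ)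
    (u : 𝒰) (h : ℋ) : ℝ :=
  ∑ w, ∑ t, PW w * PU w u * S u t * PH t h

/-- Mutual information `I(U;H)` (natural logarithm) under the joint law induced by
`PW`, `PU`, `S`, `PH`. -/
noncomputable def miUH {𝒲 𝒰 𝒯 ℋ : Type*} [Fintype 𝒲] [Fintype 𝒰] [Fintype 𝒯] [Fintype ℋ]
    (PW : 𝒲 → ℝ) (PU : 𝒲 → 𝒰 → ℝ) (S : 𝒰 → 𝒯 → ℝ) (PH : 𝒯 → ℋ → ℝ) : ℝ :=
  ∑ u, ∑ h, pUH PW PU S PH u h *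
    Real.log (pUH PW PU S PH u h /
      ((∑ h', pUH PW PU S PH u h') * (∑ u', pUH PW PU S PH u' h)))

/-- Expected distortion `E[𝖽(W,H)]` under the joint law induced by `PW`, `PU`, `S`,
`PH`. -/
noncomputable def expDist {𝒲 𝒰 𝒯 ℋ : Type*} [Fintype 𝒲] [Fintype 𝒰] [Fintype 𝒯] [Fintype ℋ]
    (PW : 𝒲 → ℝ) (PU : 𝒲 → 𝒰 → ℝ) (S : 𝒰 → 𝒯 → ℝ) (PH : 𝒯 → ℋ → ℝ)
    (dst : 𝒲 → ℋ → ℝ) : ℝ :=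
  ∑ w, ∑ u, ∑ t, ∑ h, PW w * PU w u * S u t * PH t h * dst w h

/-- The constrained information (rate-distortion) function of the finite pool-based AL
model: the infimum of `I(U;H)` over data-selection kernels `S` meeting the average
distortion constraint `E[𝖽(W,H)] ≤ d`, with value `+∞` (in `EReal`) if no such kernel
exists. -/
noncomputable def RDfun {𝒲 𝒰 𝒯 ℋ : Type*} [Fintype 𝒲] [Fintype 𝒰] [Fintype 𝒯] [Fintype ℋ]
    (PW : 𝒲 → ℝ) (PU : 𝒲 → 𝒰 → ℝ) (PH : 𝒯 → ℋ → ℝ) (dst : 𝒲 → ℋ → ℝ) (d : ℝ) : EReal :=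
  sInf {x : EReal | ∃ S : 𝒰 → 𝒯 → ℝ, IsKernel S ∧
    expDist PW PU S PH dst ≤ d ∧ x = (miUH PW PU S PH : ℝ)}

/-- Tangent-line lower bound for `a * log (a / c)` at slope parameter `x`. -/
lemma mul_log_add_sub_le_mul_log_div {a c x : ℝ} (ha : 0 ≤ a) (hc : 0 ≤ c)
    (hac : c = 0 → a = 0) (hx : 0 < x) :
    a * Real.log x + a - c * x ≤ a * Real.log (a / c) := by
  rcases ha.eq_or_lt with rfl | ha
  · simpa using mul_nonneg hc hx.le
  · have hc' : 0 < c := hc.lt_of_ne fun h => ha.ne' (hac h.symm)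
    have hlog := Real.log_le_sub_one_of_pos (show 0 < c * x / a by positivity)
    rw [Real.log_div (by positivity) ha.ne', Real.log_mul hc'.ne' hx.ne'] at hlog
    rw [Real.log_div ha.ne' hc'.ne']
    have hmul := mul_le_mul_of_nonneg_left hlog ha.le
    have hcancel : a * (c * x / a - 1) = c * x - a := by field_simp
    linarith

/-- Log-sum inequality for a weighted pair: `(a, c) ↦ a * log (a / c)` is jointly convex. -/
lemma mul_log_div_jointly_convex {a b c e s t : ℝ} (ha : 0 ≤ a) (hb : 0 ≤ b) (hc : 0 ≤ c)
    (he : 0 ≤ e) (hac : c = 0 → a = 0) (hbe : e = 0 → b = 0) (hs : 0 ≤ s) (ht : 0 ≤ t) :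
    (s * a + t * b) * Real.log ((s * a + t * b) / (s * c + t * e)) ≤
      s * (a * Real.log (a / c)) + t * (b * Real.log (b / e)) := by
  have hsa := mul_nonneg hs ha
  have htb := mul_nonneg ht hb
  have hsc := mul_nonneg hs hc
  have hte := mul_nonneg ht he
  rcases (add_nonneg hsa htb).eq_or_lt with h0 | hpos
  · have h1 : s * a = 0 := by linarith
    have h2 : t * b = 0 := by linarith
    simp [← mul_assoc, h1, h2]
  · have hden : 0 < s * c + t * e := by
      refine (add_nonneg hsc hte).lt_of_ne fun h => hpos.ne' ?_
      have h1 : s * c = 0 := by linarith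
      have h2 : t * e = 0 := by linarith
      have h3 : s * a = 0 := by
        rcases mul_eq_zero.mp h1 with h | h
        · simp [h]
        · simp [hac h]
      have h4 : t * b = 0 := by
        rcases mul_eq_zero.mp h2 with h | h
        · simp [h]
        · simp [hbe h]
      rw [h3, h4, add_zero]
    have hx := div_pos hpos hden
    have hcancel := mul_div_cancel₀ (s * a + t * b) hden.ne'
    have h1 := mul_le_mul_of_nonneg_left (mul_log_add_sub_le_mul_log_div ha hc hac hx) hs
    have h2 := mul_le_mul_of_nonneg_left (mul_log_add_sub_le_mul_log_div hb he hbe hx) ht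
    generalize (s * a + t * b) / (s * c + t * e) = x at *
    have hcancel' : (s * c + t * e) * x = s * a + t * b := by
      linarith
    linarith

section RateDistortion

variable {𝒲 𝒰 𝒯 ℋ : Type*} [Fintype 𝒲] [Fintype 𝒯]
  {PW : 𝒲 → ℝ} {PU : 𝒲 → 𝒰 → ℝ} {PH : 𝒯 → ℋ → ℝ}

/-- A convex combination of Markov kernels is a Markov kernel. -/
lemma IsKernel.convexCombo {S₁ S₂ : 𝒰 → 𝒯 → ℝ} (h₁ : IsKernel S₁) (h₂ : IsKernel S₂)
    {s t : ℝ} (hs : 0 ≤ s) (ht : 0 ≤ t) (hst : s + t = 1) :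
    IsKernel (fun u x => s * S₁ u x + t * S₂ u x) := fun u =>
  ⟨fun x => add_nonneg (mul_nonneg hs ((h₁ u).1 x)) (mul_nonneg ht ((h₂ u).1 x)), by
    rw [Finset.sum_add_distrib, ← Finset.mul_sum, ← Finset.mul_sum, (h₁ u).2, (h₂ u).2]
    linarith⟩

lemma pUH_convexCombo (S₁ S₂ : 𝒰 → 𝒯 → ℝ) (s t : ℝ) (u : 𝒰) (h : ℋ) :
    pUH PW PU (fun u x => s * S₁ u x + t * S₂ u x) PH u h =
      s * pUH PW PU S₁ PH u h + t * pUH PW PU S₂ PH u h := by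
  simp only [pUH, Finset.mul_sum, ← Finset.sum_add_distrib]
  refine Finset.sum_congr rfl fun w _ => Finset.sum_congr rfl fun x _ => ?_
  ring

lemma expDist_convexCombo [Fintype 𝒰] [Fintype ℋ] (dst : 𝒲 → ℋ → ℝ) (S₁ S₂ : 𝒰 → 𝒯 → ℝ)
    (s t : ℝ) :
    expDist PW PU (fun u x => s * S₁ u x + t * S₂ u x) PH dst =
      s * expDist PW PU S₁ PH dst + t * expDist PW PU S₂ PH dst := by
  simp only [expDist, Finset.mul_sum, ← Finset.sum_add_distrib]
  refine Finset.sum_congr rfl fun w _ => Finset.sum_congr rfl fun u _ =>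
    Finset.sum_congr rfl fun x _ => Finset.sum_congr rfl fun h _ => ?_
  ring

lemma pUH_nonneg [Fintype 𝒰] [Fintype ℋ] (hPW : ∀ w, 0 ≤ PW w) (hPU : IsKernel PU)
    (hPH : IsKernel PH) {S : 𝒰 → 𝒯 → ℝ} (hS : IsKernel S) (u : 𝒰) (h : ℋ) :
    0 ≤ pUH PW PU S PH u h :=
  Finset.sum_nonneg fun w _ => Finset.sum_nonneg fun x _ =>
    mul_nonneg (mul_nonneg (mul_nonneg (hPW w) ((hPU w).1 u)) ((hS u).1 x)) ((hPH x).1 h)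

/-- The `U`-marginal does not depend on the data-selection kernel. -/
lemma sum_pUH_eq [Fintype ℋ] (hPH : IsKernel PH) {S : 𝒰 → 𝒯 → ℝ} (hS : IsKernel S) (u : 𝒰) :
    ∑ h, pUH PW PU S PH u h = ∑ w, PW w * PU w u := by
  simp only [pUH]
  rw [Finset.sum_comm]
  refine Finset.sum_congr rfl fun w _ => ?_
  rw [Finset.sum_comm]
  simp_rw [← Finset.mul_sum, (hPH _).2, mul_one, ← Finset.mul_sum, (hS u).2, mul_one]

/-- Mutual information is convex in the data-selection kernel. -/
lemma miUH_convexCombo_le [Fintype 𝒰] [Fintype ℋ] (hPW : ∀ w, 0 ≤ PW w) (hPU : IsKernel PU)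
    (hPH : IsKernel PH) {S₁ S₂ : 𝒰 → 𝒯 → ℝ} (h₁ : IsKernel S₁) (h₂ : IsKernel S₂)
    {s t : ℝ} (hs : 0 ≤ s) (ht : 0 ≤ t) (hst : s + t = 1) :
    miUH PW PU (fun u x => s * S₁ u x + t * S₂ u x) PH ≤
      s * miUH PW PU S₁ PH + t * miUH PW PU S₂ PH := by
  have hzero : ∀ {S : 𝒰 → 𝒯 → ℝ}, IsKernel S → ∀ u h,
      (∑ w, PW w * PU w u) * ∑ u', pUH PW PU S PH u' h = 0 → pUH PW PU S PH u h = 0 := by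
    intro S hS u h hprod
    rw [← sum_pUH_eq hPH hS u] at hprod
    rcases mul_eq_zero.mp hprod with h0 | h0
    · exact (Finset.sum_eq_zero_iff_of_nonneg fun h' _ =>
        pUH_nonneg hPW hPU hPH hS u h').mp h0 h (Finset.mem_univ h)
    · exact (Finset.sum_eq_zero_iff_of_nonneg fun u' _ =>
        pUH_nonneg hPW hPU hPH hS u' h).mp h0 u (Finset.mem_univ u)
  have hq : ∀ u, 0 ≤ ∑ w, PW w * PU w u := fun u =>
    Finset.sum_nonneg fun w _ => mul_nonneg (hPW w) ((hPU w).1 u)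
  have hr : ∀ {S : 𝒰 → 𝒯 → ℝ}, IsKernel S → ∀ h, 0 ≤ ∑ u', pUH PW PU S PH u' h :=
    fun hS h => Finset.sum_nonneg fun u' _ => pUH_nonneg hPW hPU hPH hS u' h
  simp only [miUH, sum_pUH_eq hPH h₁, sum_pUH_eq hPH h₂,
    sum_pUH_eq hPH (h₁.convexCombo h₂ hs ht hst)]
  simp only [pUH_convexCombo]
  rw [Finset.mul_sum, Finset.mul_sum, ← Finset.sum_add_distrib]
  refine Finset.sum_le_sum fun u _ => ?_
  rw [Finset.mul_sum, Finset.mul_sum, ← Finset.sum_add_distrib]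
  refine Finset.sum_le_sum fun h _ => ?_
  have hlin : (∑ w, PW w * PU w u) *
        ∑ u', (s * pUH PW PU S₁ PH u' h + t * pUH PW PU S₂ PH u' h) =
      s * ((∑ w, PW w * PU w u) * ∑ u', pUH PW PU S₁ PH u' h) +
        t * ((∑ w, PW w * PU w u) * ∑ u', pUH PW PU S₂ PH u' h) := by
    rw [Finset.sum_add_distrib, ← Finset.mul_sum, ← Finset.mul_sum]
    ring
  rw [hlin]
  exact mul_log_div_jointly_convex (pUH_nonneg hPW hPU hPH h₁ u h)
    (pUH_nonneg hPW hPU hPH h₂ u h) (mul_nonneg (hq u) (hr h₁ h)) (mul_nonneg (hq u) (hr h₂ h))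
    (hzero h₁ u h) (hzero h₂ u h) hs ht

end RateDistortion

/-- **The rate-distortion function of pool-based AL is non-increasing and convex**
(properties of `ℝ_W(m,d,𝒜)` stated in Section 4.1 of the paper). -/
theorem RDfun_antitone_convex
    {𝒲 𝒰 𝒯 ℋ : Type*} [Fintype 𝒲] [Nonempty 𝒲] [Fintype 𝒰] [Nonempty 𝒰]
    [Fintype 𝒯] [Nonempty 𝒯] [Fintype ℋ] [Nonempty ℋ]
    (PW : 𝒲 → ℝ) (hPW0 : ∀ w, 0 ≤ PW w) (hPW1 : ∑ w, PW w = 1)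
    (PU : 𝒲 → 𝒰 → ℝ) (hPU : IsKernel PU)
    (PH : 𝒯 → ℋ → ℝ) (hPH : IsKernel PH)
    (dst : 𝒲 → ℋ → ℝ) (hdst : ∀ w h, 0 ≤ dst w h) :
    (∀ d₁ d₂ : ℝ, d₁ ≤ d₂ → RDfun PW PU PH dst d₂ ≤ RDfun PW PU PH dst d₁)
    ∧ (∀ d₁ d₂ θ : ℝ,
        RDfun PW PU PH dst d₁ < ⊤ → RDfun PW PU PH dst d₂ < ⊤ →
        0 ≤ θ → θ ≤ 1 →
          RDfun PW PU PH dst (θ * d₁ + (1 - θ) * d₂)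
            ≤ (θ : EReal) * RDfun PW PU PH dst d₁
              + ((1 - θ : ℝ) : EReal) * RDfun PW PU PH dst d₂) := by
  refine ⟨fun d₁ d₂ hd => sInf_le_sInf ?_, fun d₁ d₂ θ hfin₁ hfin₂ hθ0 hθ1 => ?_⟩
  · rintro x ⟨S, hS, hdist, rfl⟩
    exact ⟨S, hS, hdist.trans hd, rfl⟩
  rcases hθ0.eq_or_lt with rfl | hθ0'
  · simp
  rcases hθ1.eq_or_lt with rfl | hθ1'
  · simp
  have hθ' : 0 < 1 - θ := sub_pos.mpr hθ1'
  have hposE : ∀ {r : ℝ}, 0 < r → (0 : EReal) < r := fun h => EReal.coe_pos.mpr h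
  have hmul_ne_top : ∀ {r : ℝ} {x : EReal}, 0 < r → x < ⊤ → (r : EReal) * x ≠ ⊤ := by
    intro r x hr hx
    induction x with
    | bot => simp [EReal.coe_mul_bot_of_pos hr]
    | coe y => exact_mod_cast EReal.coe_ne_top (r * y)
    | top => exact absurd hx (lt_irrefl _)
  have hexists : ∀ {r d : ℝ} {x : EReal}, 0 < r → (r : EReal) * RDfun PW PU PH dst d < x →
      ∃ S : 𝒰 → 𝒯 → ℝ, IsKernel S ∧ expDist PW PU S PH dst ≤ d ∧
        ((r * miUH PW PU S PH : ℝ) : EReal) < x := by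
    intro r d x hr hx
    rw [mul_comm, ← EReal.lt_div_iff (hposE hr) (EReal.coe_ne_top r)] at hx
    obtain ⟨_, ⟨S, hS, hdist, rfl⟩, hlt⟩ := sInf_lt_iff.mp hx
    rw [EReal.lt_div_iff (hposE hr) (EReal.coe_ne_top r), mul_comm] at hlt
    exact ⟨S, hS, hdist, by rwa [EReal.coe_mul]⟩
  refine EReal.le_add_of_forall_gt (Or.inr (hmul_ne_top hθ' hfin₂))
    (Or.inl (hmul_ne_top hθ0' hfin₁)) fun x hx y hy => ?_
  obtain ⟨S₁, hS₁, hdist₁, hlt₁⟩ := hexists hθ0' hx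
  obtain ⟨S₂, hS₂, hdist₂, hlt₂⟩ := hexists hθ' hy
  have hsum : θ + (1 - θ) = 1 := by ring
  calc RDfun PW PU PH dst (θ * d₁ + (1 - θ) * d₂)
      ≤ (miUH PW PU (fun u t => θ * S₁ u t + (1 - θ) * S₂ u t) PH : ℝ) := by
        refine sInf_le ⟨_, hS₁.convexCombo hS₂ hθ0 hθ'.le hsum, ?_, rfl⟩
        rw [expDist_convexCombo]
        gcongr
    _ ≤ ((θ * miUH PW PU S₁ PH + (1 - θ) * miUH PW PU S₂ PH : ℝ) : EReal) :=
        EReal.coe_le_coe_iff.mpr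
          (miUH_convexCombo_le hPW0 hPU hPH hS₁ hS₂ hθ0 hθ'.le hsum)
    _ ≤ x + y := by
        rw [EReal.coe_add]
        exact add_le_add hlt₁.le hlt₂.le
end
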